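/- For every positive integer n there exist infinitely many words over an alphabet with 2(n+2) letters each of which simultaneously avoids every non-blocking pattern having at most n distinct letters. In other words, the set of all avoidable patterns in n or fewer letters can be avoided on an alphabet with 2(n+2) letters. -/

import Mathlib

/-- A word `w` *encounters* the pattern `u` if some letterwise substitution `h`
(sending each letter of `u` to a nonempty word) maps `u` onto a factor
(contiguous subword) of `w`. -/
def Encounters {Y B : Type*} (u : List Y) (w : List B) : Prop :=
  ∃ h : Y → List B, (∀ y ∈ u, h y ≠ []) ∧ u.flatMap h <:+: w

/-- A word `w` *avoids* the pattern `u` if it does not encounter it. -/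
def Avoids {Y B : Type*} (u : List Y) (w : List B) : Prop := ¬ Encounters u w

/-- A pattern `u` is `n`-avoidable if infinitely many words over an
`n`-letter alphabet avoid `u`. -/
def NAvoidable {Y : Type*} (u : List Y) (n : ℕ) : Prop :=
  {w : List (Fin n) | Avoids u w}.Infinite

/-- A pattern `u` is *blocking* (unavoidable) if over every finite alphabet
only finitely many words avoid `u`. -/
def Blocking {Y : Type*} (u : List Y) : Prop :=
  ∀ n : ℕ, {w : List (Fin n) | Avoids u w}.Finite

/-!
The avoiding words are the prefixes of an infinite word `ω` over `ZMod 2 × ZMod q` which encodes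
itself. It is cut into blocks of the even lengths closest to `q`. At the odd positions it counts
modulo `q`, and at the even positions of the `b`-th block this count is shifted by a residue read
off from `ω b`. Hence any two consecutive letters determine the position modulo `2 * q` and the
letter `ω b` encoded by the block.

Suppose that `ω` contains an image `h p` of a pattern `p` with fewer letters than any block has
positions. Mark one position in each block, depending only on the letter it encodes, such that no
word `h x` starts with a marked letter. Decoding each `h x` at its marks yields a shorter image, in
`ω` again, of the pattern obtained from `p` by deleting the letters `x` for which `h x` has no mark.
By induction the shorter pattern is encountered by a Zimin word.

The deleted letters are put back in three stages. At each stage they strictly increase a bounded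
potential on the gaps of `ω`: the parity of the gap, the count modulo `q`, and the side of the mark
in the block. Letters which raise such a potential from one value to the next never start where
another of them ends, so that erasing them in the pattern can be compensated by passing to the next
Zimin word. Thus `p` is encountered by a Zimin word as well, and is blocking.
-/

/-- Inserts the letter `0` before each letter of a word, after shifting all letters by one. -/
def spread (w : List ℕ) : List ℕ := w.flatMap fun z => [0, z + 1]

/-- The Zimin words `0`, `010`, `0102010`, …, generated from the inside out: each is obtained from
the previous one by interleaving it with a new letter, rather than by `Z ↦ Z N Z`. -/
def zimin : ℕ → List ℕ
  | 0 => []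
  | N + 1 => spread (zimin N) ++ [0]

theorem spread_append (v w : List ℕ) : spread (v ++ w) = spread v ++ spread w :=
  List.flatMap_append

theorem zimin_succ (N : ℕ) : zimin (N + 1) = zimin N ++ [N] ++ zimin N := by
  induction N with
  | zero => rfl
  | succ N ih =>
    calc zimin (N + 2) = spread (zimin N ++ [N] ++ zimin N) ++ [0] := by rw [← ih]; rfl
      _ = zimin (N + 1) ++ [N + 1] ++ zimin (N + 1) := by simp [zimin, spread]

theorem lt_of_mem_zimin {N z : ℕ} (hz : z ∈ zimin N) : z < N := by
  induction N with
  | zero => simp [zimin] at hz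
  | succ N ih =>
    simp only [zimin_succ, List.mem_append, List.mem_singleton] at hz
    rcases hz with (hz | rfl) | hz
    · exact (ih hz).trans N.lt_succ_self
    · exact z.lt_succ_self
    · exact (ih hz).trans N.lt_succ_self

section Encounters

variable {X Y B C : Type*}

theorem Encounters.trans {p : List X} {z : List Y} {w : List B}
    (hpz : Encounters p z) (hzw : Encounters z w) : Encounters p w := by
  obtain ⟨h, hne, hpz⟩ := hpz
  obtain ⟨g, gne, hzw⟩ := hzw
  refine ⟨fun x => (h x).flatMap g, fun x hx hnil => ?_, ?_⟩
  · obtain ⟨y, hy⟩ := List.exists_mem_of_ne_nil _ (hne x hx)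
    exact gne y (hpz.subset (List.mem_flatMap_of_mem hx hy)) (List.flatMap_eq_nil_iff.1 hnil y hy)
  · obtain ⟨a, b, rfl⟩ := hpz
    refine .trans ⟨a.flatMap g, b.flatMap g, ?_⟩ hzw
    simp only [List.flatMap_append, List.flatMap_assoc]

theorem Encounters.map {p : List Y} {w : List B} (hp : Encounters p w) (f : B → C) :
    Encounters p (w.map f) := by
  obtain ⟨h, hne, hp⟩ := hp
  refine ⟨fun y => (h y).map f, fun y hy => by simpa using hne y hy, ?_⟩
  rw [← List.map_flatMap]
  exact hp.map f

theorem exists_eq_append_of_take_drop_eq {w : List B} {i j L : ℕ} (hij : i + L < j)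
    (hj : j + L ≤ w.length) (heq : (w.drop i).take L = (w.drop j).take L) :
    ∃ a f c b : List B, f.length = L ∧ c ≠ [] ∧ w = a ++ f ++ c ++ f ++ b := by
  refine ⟨w.take i, (w.drop i).take L, (w.drop (i + L)).take (j - (i + L)), w.drop (j + L),
    ?_, ?_, ?_⟩
  · rw [List.length_take, List.length_drop]
    omega
  · apply List.ne_nil_of_length_pos
    rw [List.length_take, List.length_drop]
    omega
  · have second : (w.drop i).take L ++ w.drop (j + L) = w.drop j := by
      rw [heq, ← List.drop_drop, List.take_append_drop]
    have middle : (w.drop (i + L)).take (j - (i + L)) ++ w.drop j = w.drop (i + L) := by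
      have := List.take_append_drop (j - (i + L)) (w.drop (i + L))
      rwa [List.drop_drop, Nat.add_sub_cancel' hij.le] at this
    rw [List.append_assoc, second, List.append_assoc, middle, List.append_assoc, ← List.drop_drop,
      List.take_append_drop, List.take_append_drop]

theorem exists_repeated_factor [Fintype B] (L : ℕ) (w : List B)
    (hw : (Fintype.card B ^ L + 1) * (L + 1) ≤ w.length) :
    ∃ a f c b : List B, f.length = L ∧ c ≠ [] ∧ w = a ++ f ++ c ++ f ++ b := by
  set M := Fintype.card B ^ L + 1 with hM
  have hfit (i : ℕ) (hi : i < M) : i * (L + 1) + (L + 1) ≤ w.length := by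
    rw [← Nat.succ_mul]
    exact (Nat.mul_le_mul_right _ hi).trans hw
  have hlen (i : Fin M) : ((w.drop (i * (L + 1))).take L).length = L := by
    have := hfit i i.2
    simp only [List.length_take, List.length_drop]
    omega
  obtain ⟨i, j, hne, heq⟩ := Fintype.exists_ne_map_eq_of_card_lt
    (β := List.Vector B L) (fun i : Fin M => ⟨_, hlen i⟩) (by simp [hM])
  wlog hij : i < j generalizing i j
  · exact this j i hne.symm heq.symm (lt_of_le_of_ne (not_lt.1 hij) hne.symm)
  have hgap : i * (L + 1) + (L + 1) ≤ j * (L + 1) := by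
    rw [← Nat.succ_mul]
    exact Nat.mul_le_mul_right _ hij
  have := hfit j j.2
  exact exists_eq_append_of_take_drop_eq (by omega) (by omega) (congrArg Subtype.val heq)

theorem Encounters.zimin_succ_of_repeated {N : ℕ} {a f c b : List B} (hf : Encounters (zimin N) f)
    (hc : c ≠ []) : Encounters (zimin (N + 1)) (a ++ f ++ c ++ f ++ b) := by
  obtain ⟨h, hne, a', b', rfl⟩ := hf
  set g : ℕ → List B := Function.update h N (b' ++ c ++ a') with hg
  have hgh (z : ℕ) (hz : z ∈ zimin N) : g z = h z :=
    Function.update_of_ne (lt_of_mem_zimin hz).ne _ _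
  have hgN : g N = b' ++ c ++ a' := Function.update_self ..
  refine ⟨g, fun z hz => ?_, a ++ a', b' ++ b, ?_⟩
  · simp only [zimin_succ, List.mem_append, List.mem_singleton] at hz
    rcases hz with (hz | rfl) | hz
    · exact hgh z hz ▸ hne z hz
    · simp [hgN, hc]
    · exact hgh z hz ▸ hne z hz
  · simp only [zimin_succ, List.flatMap_append, List.flatMap_congr hgh,
      List.flatMap_singleton, hgN, List.append_assoc]

theorem exists_length_encounters_zimin (B : Type*) [Finite B] (N : ℕ) :
    ∃ L : ℕ, ∀ w : List B, L ≤ w.length → Encounters (zimin N) w := by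
  induction N with
  | zero => exact ⟨0, fun w _ => ⟨fun _ => [], by simp [zimin], by simp [zimin]⟩⟩
  | succ N ih =>
    have := Fintype.ofFinite B
    obtain ⟨L, hL⟩ := ih
    refine ⟨(Fintype.card B ^ L + 1) * (L + 1), fun w hw => ?_⟩
    obtain ⟨a, f, c, b, hf, hc, rfl⟩ := exists_repeated_factor L w hw
    exact (hL f hf.ge).zimin_succ_of_repeated hc

end Encounters

section FreeDeletion

variable {Y γ δ : Type*}

/-- `p` is encountered by some Zimin word; this is the only source of blocking patterns here. -/
def ZiminEncounters (p : List Y) : Prop := ∃ N, Encounters p (zimin N)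

theorem ZiminEncounters.blocking {p : List Y} (hp : ZiminEncounters p) : Blocking p := by
  intro k
  obtain ⟨N, hN⟩ := hp
  obtain ⟨L, hL⟩ := exists_length_encounters_zimin (Fin k) N
  refine (List.finite_length_lt (Fin k) L).subset fun w hw => ?_
  by_contra hlen
  exact hw (hN.trans (hL w (not_lt.1 hlen)))

/-- The word `p` is a walk from `g` to `g'` when each letter `x` is read as an arrow from `src x` to
`tgt x`. -/
def IsWalk (src tgt : Y → γ) : List Y → γ → γ → Prop
  | [], g, g' => g = g'
  | x :: p, g, g' => src x = g ∧ IsWalk src tgt p (tgt x) g'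

theorem IsWalk.map {src tgt : Y → γ} (f : γ → δ) {p : List Y} {g g' : γ}
    (hp : IsWalk src tgt p g g') : IsWalk (f ∘ src) (f ∘ tgt) p (f g) (f g') := by
  induction p generalizing g with
  | nil => exact congrArg f hp
  | cons x p ih => exact ⟨congrArg f hp.1, ih hp.2⟩

theorem IsWalk.filter {src tgt : Y → γ} {K : Y → Prop} [DecidablePred K] {p : List Y} {g g' : γ}
    (hp : IsWalk src tgt p g g') (hK : ∀ x ∈ p, ¬ K x → src x = tgt x) :
    IsWalk src tgt (p.filter K) g g' := by
  induction p generalizing g with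
  | nil => exact hp
  | cons x p ih =>
    obtain ⟨rfl, hp⟩ := hp
    have tail := ih hp (List.forall_mem_of_forall_mem_cons hK)
    by_cases hx : K x
    · simpa [hx] using ⟨rfl, tail⟩
    · simpa [hx, hK x List.mem_cons_self hx] using tail

/-- The word `0` or the empty word, according to whether a gap receives an additional `0`. -/
def pad (b : Bool) : List ℕ := if b then [0] else []

theorem pad_prefix_spread {w : List ℕ} (hw : w ≠ []) (b : Bool) : pad b <+: spread w := by
  obtain ⟨z, v, rfl⟩ := List.exists_cons_of_ne_nil hw
  cases b <;> simp [pad, spread]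

theorem pad_prefix_spread_append_zero (w : List ℕ) (b : Bool) : pad b <+: spread w ++ [0] := by
  rcases eq_or_ne w [] with rfl | hw
  · cases b <;> simp [pad, spread]
  · exact (pad_prefix_spread hw b).trans (List.prefix_append _ _)

/-- The substitution which lifts a possibly erasing substitution `h` into a Zimin word to the next
Zimin word, by moving the `0` at the gap before `x` (if `src x`) to the image of the letter
preceding `x`. -/
def liftSubst (src tgt : Y → Bool) (h : Y → List ℕ) (x : Y) : List ℕ :=
  (spread (h x) ++ pad (tgt x)).drop (pad (src x)).length

theorem pad_append_liftSubst {src tgt : Y → Bool} {h : Y → List ℕ} {x : Y}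
    (hx : h x = [] → src x = false) :
    pad (src x) ++ liftSubst src tgt h x = spread (h x) ++ pad (tgt x) := by
  refine List.prefix_append_drop ?_ |>.symm
  by_cases hnil : h x = []
  · simp [pad, hx hnil]
  · exact (pad_prefix_spread hnil _).trans (List.prefix_append _ _)

theorem liftSubst_ne_nil {src tgt : Y → Bool} {h : Y → List ℕ} {x : Y}
    (hx : h x = [] → src x = false ∧ tgt x = true) : liftSubst src tgt h x ≠ [] := by
  by_cases hnil : h x = []
  · simp [liftSubst, hnil, hx hnil, spread, pad]
  · obtain ⟨z, v, hzv⟩ := List.exists_cons_of_ne_nil hnil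
    cases hs : src x <;> simp [liftSubst, hzv, hs, spread, pad]

theorem IsWalk.pad_append_flatMap_liftSubst {src tgt : Y → Bool} {h : Y → List ℕ} {p : List Y}
    {g g' : Bool} (hp : IsWalk src tgt p g g') (hh : ∀ x ∈ p, h x = [] → src x = false) :
    pad g ++ p.flatMap (liftSubst src tgt h) = spread (p.flatMap h) ++ pad g' := by
  induction p generalizing g with
  | nil => simp [show g = g' from hp, spread]
  | cons x p ih =>
    obtain ⟨rfl, hp⟩ := hp
    calc pad (src x) ++ (x :: p).flatMap (liftSubst src tgt h)
        = spread (h x) ++ (pad (tgt x) ++ p.flatMap (liftSubst src tgt h)) := by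
          rw [List.flatMap_cons, ← List.append_assoc,
            pad_append_liftSubst (hh x List.mem_cons_self), List.append_assoc]
      _ = spread ((x :: p).flatMap h) ++ pad g' := by
          rw [ih hp (List.forall_mem_of_forall_mem_cons hh), List.flatMap_cons, spread_append,
            List.append_assoc]

/-- The letters erased by `h` form a free set: none of them starts where another one ends. -/
theorem IsWalk.encounters_zimin_succ {src tgt : Y → Bool} {h : Y → List ℕ} {p : List Y}
    {g g' : Bool} {N : ℕ} (hp : IsWalk src tgt p g g')
    (hh : ∀ x ∈ p, h x = [] → src x = false ∧ tgt x = true) (hN : p.flatMap h <:+: zimin N) :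
    Encounters p (zimin (N + 1)) := by
  refine ⟨liftSubst src tgt h, fun x hx => liftSubst_ne_nil (hh x hx), ?_⟩
  obtain ⟨a, b, hab⟩ := hN
  calc p.flatMap (liftSubst src tgt h)
      <:+: spread (p.flatMap h) ++ pad g' :=
        ⟨pad g, [], by
          rw [List.append_nil, hp.pad_append_flatMap_liftSubst fun x hx hnil => (hh x hx hnil).1]⟩
    _ <:+: spread (p.flatMap h) ++ (spread b ++ [0]) :=
        ((List.prefix_append_right_inj _).2 (pad_prefix_spread_append_zero b g')).isInfix
    _ <:+: zimin (N + 1) :=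
        ⟨spread a, [], by simp only [zimin, ← hab, spread_append, List.append_assoc,
          List.append_nil]⟩

theorem flatMap_filter_eq_flatMap_ite {B : Type*} (p : List Y) (K : Y → Prop) [DecidablePred K]
    (h : Y → List B) : (p.filter K).flatMap h = p.flatMap fun x => if K x then h x else [] := by
  induction p with
  | nil => rfl
  | cons x p ih => by_cases hx : K x <;> simp [hx, ih]

theorem ZiminEncounters.of_filter_free {src tgt : Y → Bool} {K : Y → Prop} [DecidablePred K]
    {p : List Y} {g g' : Bool} (hp : IsWalk src tgt p g g')
    (hK : ∀ x ∈ p, ¬ K x → src x = false ∧ tgt x = true) (hZ : ZiminEncounters (p.filter K)) :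
    ZiminEncounters p := by
  obtain ⟨N, h, hne, hN⟩ := hZ
  rw [flatMap_filter_eq_flatMap_ite] at hN
  refine ⟨N + 1, hp.encounters_zimin_succ (fun x hx hnil => hK x hx fun hKx => ?_) hN⟩
  rw [if_pos hKx] at hnil
  exact hne x (List.mem_filter.2 ⟨hx, decide_eq_true hKx⟩) hnil

/-- The letters which climb from `0` to `1` are free. Deleting them makes it possible to identify
the levels `0` and `1`, which lowers the height by one. -/
theorem ZiminEncounters.of_filter_lt (M : ℕ) {src tgt : Y → ℕ} {K : Y → Prop} [DecidablePred K]
    {p : List Y} {g g' : ℕ} (hp : IsWalk src tgt p g g')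
    (hK : ∀ x ∈ p, ¬ K x → src x < tgt x ∧ tgt x ≤ M) (hZ : ZiminEncounters (p.filter K)) :
    ZiminEncounters p := by
  induction M generalizing src tgt p g g' with
  | zero =>
    rwa [List.filter_eq_self.2 fun x hx => ?_] at hZ
    by_contra hKx
    have := hK x hx (by simpa using hKx)
    omega
  | succ M ih =>
    let K₀ (x : Y) : Prop := K x ∨ ¬ (src x = 0 ∧ tgt x = 1)
    have hK₀ {x : Y} (hx : ¬ K₀ x) : src x = 0 ∧ tgt x = 1 := not_not.1 (not_or.1 hx).2
    classical
    apply ZiminEncounters.of_filter_free (K := K₀) (hp.map fun c => decide (c ≠ 0))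
    · intro x _ hx
      simp [hK₀ hx]
    · refine ih ((hp.map (· - 1)).filter ?_) ?_ ?_
      · intro x _ hx
        simp [hK₀ hx]
      · intro x hx hKx
        obtain ⟨hxp, hx₀⟩ := List.mem_filter.1 hx
        have hlt := hK x hxp hKx
        have hx₀ : ¬ (src x = 0 ∧ tgt x = 1) := (of_decide_eq_true hx₀).resolve_left hKx
        simp only [Function.comp]
        omega
      · rw [List.filter_filter]
        convert hZ using 3 with x
        by_cases hx : K x <;> simp [K₀, hx]

end FreeDeletion

section Occurrences

variable {Y B γ : Type*}

/-- The finite word `w` occurs in the infinite word `ω` at position `s`. -/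
def OccursAt (ω : ℕ → B) (w : List B) (s : ℕ) : Prop :=
  w = (List.range' s w.length).map ω

theorem OccursAt.getElem {ω : ℕ → B} {w : List B} {s i : ℕ} (hw : OccursAt ω w s)
    (hi : i < w.length) : w[i] = ω (s + i) := by
  simpa using List.getElem_of_eq hw hi

theorem OccursAt.apply_eq {ω : ℕ → B} {w : List B} {s t i : ℕ} (hs : OccursAt ω w s)
    (ht : OccursAt ω w t) (hi : i < w.length) : ω (s + i) = ω (t + i) :=
  (hs.getElem hi).symm.trans (ht.getElem hi)

theorem OccursAt.apply_eq_of_ne_nil {ω : ℕ → B} {w : List B} {s t : ℕ} (hs : OccursAt ω w s)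
    (ht : OccursAt ω w t) (hw : w ≠ []) : ω s = ω t :=
  hs.apply_eq ht (List.length_pos_of_ne_nil hw)

theorem occursAt_append {ω : ℕ → B} {v w : List B} {s : ℕ} :
    OccursAt ω (v ++ w) s ↔ OccursAt ω v s ∧ OccursAt ω w (s + v.length) := by
  unfold OccursAt
  rw [List.length_append, ← List.range'_append_1, List.map_append]
  exact List.append_eq_append_iff_of_size_eq_left (by simp)

theorem exists_occursAt_of_infix {ω : ℕ → B} {w : List B} {m : ℕ}
    (hw : w <:+: (List.range m).map ω) : ∃ s, OccursAt ω w s := by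
  obtain ⟨a, b, hab⟩ := hw
  have : OccursAt ω (a ++ w ++ b) 0 := by simp [OccursAt, hab, List.range_eq_range']
  exact ⟨_, (occursAt_append.1 (occursAt_append.1 this).1).2⟩

theorem occursAt_flatMap_cons {ω : ℕ → B} {h : Y → List B} {x : Y} {p : List Y} {s : ℕ} :
    OccursAt ω ((x :: p).flatMap h) s ↔
      OccursAt ω (h x) s ∧ OccursAt ω (p.flatMap h) (s + (h x).length) := by
  rw [List.flatMap_cons, occursAt_append]

theorem OccursAt.exists_of_mem {ω : ℕ → B} {h : Y → List B} {p : List Y} {s : ℕ} {x : Y}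
    (hp : OccursAt ω (p.flatMap h) s) (hx : x ∈ p) : ∃ t, OccursAt ω (h x) t := by
  obtain ⟨a, b, rfl⟩ := List.append_of_mem hx
  rw [List.flatMap_append, occursAt_append, occursAt_flatMap_cons] at hp
  exact ⟨_, hp.2.1⟩

theorem OccursAt.isWalk_filter {ω : ℕ → B} {h : Y → List B} {p : List Y} {s : ℕ}
    {K : Y → Prop} [DecidablePred K] {κ : ℕ → γ} {src tgt : Y → γ}
    (hp : OccursAt ω (p.flatMap h) s)
    (hdrop : ∀ x ∈ p, ¬ K x → ∀ t, OccursAt ω (h x) t → κ (t + (h x).length) = κ t)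
    (hkeep : ∀ x ∈ p, K x → ∀ t, OccursAt ω (h x) t →
      src x = κ t ∧ tgt x = κ (t + (h x).length)) :
    IsWalk src tgt (p.filter K) (κ s) (κ (s + (p.flatMap h).length)) := by
  induction p generalizing s with
  | nil => rfl
  | cons x p ih =>
    obtain ⟨hx, hp⟩ := occursAt_flatMap_cons.1 hp
    have tail := ih hp (List.forall_mem_of_forall_mem_cons hdrop)
      (List.forall_mem_of_forall_mem_cons hkeep)
    rw [add_assoc, ← List.length_append, ← List.flatMap_cons] at tail
    by_cases hK : K x
    · obtain ⟨hsrc, htgt⟩ := hkeep x List.mem_cons_self hK s hx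
      rw [List.filter_cons, if_pos (decide_eq_true hK)]
      exact ⟨hsrc, htgt ▸ tail⟩
    · rw [hdrop x List.mem_cons_self hK s hx] at tail
      rwa [List.filter_cons_of_neg (by simpa using hK)]

/-- The potential `κ` lives on the gaps of `ω`. Letters outside `K` have been deleted before; this
identifies the gaps on either side of them, which `κ` must respect. -/
theorem OccursAt.ziminEncounters_filter_of_lt {ω : ℕ → B} {h : Y → List B} {p : List Y} {s : ℕ}
    {K K' : Y → Prop} [DecidablePred K] [DecidablePred K'] {κ : ℕ → ℕ} {M : ℕ}
    (hp : OccursAt ω (p.flatMap h) s) (hκ : ∀ t, κ t ≤ M) (hK' : ∀ x ∈ p, K' x → K x)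
    (hdrop : ∀ x ∈ p, ¬ K x → ∀ t, OccursAt ω (h x) t → κ (t + (h x).length) = κ t)
    (hkeep : ∀ x ∈ p, K x → ∀ t t', OccursAt ω (h x) t → OccursAt ω (h x) t' →
      κ t = κ t' ∧ κ (t + (h x).length) = κ (t' + (h x).length))
    (hlt : ∀ x ∈ p, K x → ¬ K' x → ∀ t, OccursAt ω (h x) t → κ t < κ (t + (h x).length))
    (hZ : ZiminEncounters (p.filter K')) : ZiminEncounters (p.filter K) := by
  set pos : Y → ℕ := fun x => Classical.epsilon (OccursAt ω (h x))
  have hpos (x : Y) (hx : x ∈ p) : OccursAt ω (h x) (pos x) :=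
    Classical.epsilon_spec (hp.exists_of_mem hx)
  have walk := hp.isWalk_filter (src := fun x => κ (pos x))
    (tgt := fun x => κ (pos x + (h x).length)) hdrop
    fun x hx hKx t => hkeep x hx hKx _ _ (hpos x hx)
  refine .of_filter_lt M walk (K := K') (fun x hx hK'x => ?_) ?_
  · obtain ⟨hx, hKx⟩ := List.mem_filter.1 hx
    exact ⟨hlt x hx (of_decide_eq_true hKx) hK'x _ (hpos x hx), hκ _⟩
  · convert hZ using 1
    rw [List.filter_filter]
    refine List.filter_congr fun x hx => ?_
    simpa using hK' x hx

theorem OccursAt.filterMap_flatMap {ω : ℕ → B} {h h' : Y → List B} {f : ℕ → Option B}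
    {p : List Y} {s : ℕ} (hp : OccursAt ω (p.flatMap h) s)
    (hh : ∀ x ∈ p, ∀ t, OccursAt ω (h x) t → h' x = (List.range' t (h x).length).filterMap f) :
    p.flatMap h' = (List.range' s (p.flatMap h).length).filterMap f := by
  induction p generalizing s with
  | nil => rfl
  | cons x p ih =>
    obtain ⟨hx, hp⟩ := occursAt_flatMap_cons.1 hp
    rw [List.flatMap_cons, List.flatMap_cons, List.length_append, ← List.range'_append_1,
      List.filterMap_append, hh x List.mem_cons_self s hx,
      ih hp (List.forall_mem_of_forall_mem_cons hh)]

theorem exists_filterMap_range'_eq_range' {m : ℕ → ℕ} (hm : StrictMono m) {f : ℕ → Option ℕ}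
    (hf : ∀ j b, f j = some b ↔ m b = j) (s d : ℕ) :
    ∃ c e, (List.range' s d).filterMap f = List.range' c e ∧ ∀ b, b < c + e ↔ m b < s + d := by
  induction d with
  | zero =>
    have hex : ∃ b, s ≤ m b := ⟨s, hm.le_apply⟩
    refine ⟨Nat.find hex, 0, rfl, fun b => ⟨fun hb => ?_, fun hb => ?_⟩⟩
    · exact not_le.1 (Nat.find_min hex hb)
    · exact hm.lt_iff_lt.1 (hb.trans_le (Nat.find_spec hex))
  | succ d ih =>
    obtain ⟨c, e, heq, hlt⟩ := ih
    rw [List.range'_1_concat, List.filterMap_append, heq]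
    rcases hfj : f (s + d) with _ | b
    · refine ⟨c, e, by simp [hfj], fun b => ?_⟩
      have : m b ≠ s + d := fun h => by simp [(hf _ _).2 h] at hfj
      rw [hlt]
      omega
    · have hb : m b = s + d := (hf _ _).1 hfj
      have hcount (b' : ℕ) : b' < c + e ↔ b' < b := by rw [hlt, ← hb, hm.lt_iff_lt]
      have hbc : c + e = b := le_antisymm (not_lt.1 fun h => by simpa using (hcount _).1 h)
        (not_lt.1 fun h => by simpa using (hcount _).2 h)
      refine ⟨c, e + 1, by simp [hfj, List.range'_1_concat, hbc], fun b' => ?_⟩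
      have : m b' ≤ s + d ↔ b' ≤ b := by rw [← hb, hm.le_iff_le]
      omega

end Occurrences

section AvoidingWord

/-- The number of the block containing the position `j`; see `blockStart`. -/
def blockIndex (q j : ℕ) : ℕ := (2 * (j / 2) + 1) / q

/-- The first position of the `b`-th block: the even number among `q * b - 1` and `q * b`. -/
def blockStart (q b : ℕ) : ℕ := 2 * (q * b / 2)

variable {q : ℕ}

theorem blockStart_le_iff (hq : 0 < q) {b j : ℕ} : blockStart q b ≤ j ↔ b ≤ blockIndex q j := by
  rw [blockIndex, Nat.le_div_iff_mul_le hq, blockStart, mul_comm b q]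
  omega

theorem lt_blockStart_iff (hq : 0 < q) {b j : ℕ} : j < blockStart q b ↔ blockIndex q j < b := by
  rw [← not_le, blockStart_le_iff hq, not_le]

theorem blockStart_add_le (q b : ℕ) : blockStart q b + 2 * (q / 2) ≤ blockStart q (b + 1) := by
  rw [blockStart, blockStart, mul_add_one]
  omega

theorem blockIndex_blockStart_add (hq : 0 < q) (b : ℕ) {o : ℕ} (ho : o < 2 * (q / 2)) :
    blockIndex q (blockStart q b + o) = b := by
  refine le_antisymm (Nat.lt_succ_iff.1 ((lt_blockStart_iff hq).1 ?_))
    ((blockStart_le_iff hq).1 (Nat.le_add_right _ _))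
  exact (Nat.add_lt_add_left ho _).trans_le (blockStart_add_le q b)

theorem blockIndex_add_two_mul (hq : 0 < q) (j : ℕ) :
    blockIndex q (j + 2 * q) = blockIndex q j + 2 := by
  rw [blockIndex, blockIndex, Nat.add_mul_div_left _ _ two_pos,
    show 2 * (j / 2 + q) + 1 = 2 * (j / 2) + 1 + 2 * q by ring, Nat.add_mul_div_right _ _ hq]

theorem blockStart_add_two (q b : ℕ) : blockStart q (b + 2) = blockStart q b + 2 * q := by
  rw [blockStart, blockStart, mul_add, mul_comm q 2, Nat.add_mul_div_left _ _ two_pos, mul_add]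

theorem blockIndex_lt_self (hq : 2 ≤ q) {j : ℕ} (hj : 0 < j) : blockIndex q j < j := by
  rw [blockIndex, Nat.div_lt_iff_lt_mul (by omega)]
  calc 2 * (j / 2) + 1 < j * 2 := by omega
    _ ≤ j * q := Nat.mul_le_mul_left j hq

/-- The letters of the avoiding word: a parity and a residue modulo `q`. -/
abbrev Letter (q : ℕ) := ZMod 2 × ZMod q

/-- The second component of the avoiding word. At the odd positions it counts modulo `q`; at the
even positions of the `b`-th block it is the same count, shifted by the `b`-th residue. (The
condition `blockIndex q j < j` only makes the recursion well-founded.) -/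
def residue (q j : ℕ) : ZMod q :=
  if j % 2 = 0 ∧ blockIndex q j < j then (j / 2 : ℕ) + residue q (blockIndex q j) else (j / 2 : ℕ)
termination_by j

/-- The infinite word `ω` whose prefixes avoid patterns; its `b`-th block encodes `ω b`. -/
def avoidingWord (q j : ℕ) : Letter q := (j, residue q j)

theorem residue_of_odd {j : ℕ} (hj : j % 2 = 1) : residue q j = (j / 2 : ℕ) := by
  rw [residue, if_neg (by simp [hj])]

theorem residue_of_even (hq : 2 ≤ q) {j : ℕ} (hj : j % 2 = 0) :
    residue q j = (j / 2 : ℕ) + residue q (blockIndex q j) := by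
  rcases j.eq_zero_or_pos with rfl | hpos
  · simp [residue, blockIndex, Nat.div_eq_of_lt (show 1 < q from hq)]
  · rw [residue, if_pos ⟨hj, blockIndex_lt_self hq hpos⟩]

theorem avoidingWord_eq_iff {j j' : ℕ} :
    avoidingWord q j = avoidingWord q j' ↔ j % 2 = j' % 2 ∧ residue q j = residue q j' := by
  rw [avoidingWord, avoidingWord, Prod.mk.injEq, ZMod.natCast_eq_natCast_iff']

theorem modEq_two_mul_iff {j j' : ℕ} :
    j ≡ j' [MOD 2 * q] ↔ j % 2 = j' % 2 ∧ ((j / 2 : ℕ) : ZMod q) = (j' / 2 : ℕ) := by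
  rw [Nat.ModEq, Nat.mod_mul, Nat.mod_mul, ZMod.natCast_eq_natCast_iff']
  omega

theorem modEq_of_avoidingWord_eq_of_odd {j j' : ℕ} (hj : j % 2 = 1)
    (heq : avoidingWord q j = avoidingWord q j') : j ≡ j' [MOD 2 * q] := by
  obtain ⟨hpar, hres⟩ := avoidingWord_eq_iff.1 heq
  rw [residue_of_odd hj, residue_of_odd (hpar.symm.trans hj)] at hres
  exact modEq_two_mul_iff.2 ⟨hpar, hres⟩

theorem modEq_of_avoidingWord_eq_of_blockIndex_eq (hq : 2 ≤ q) {j j' : ℕ}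
    (heq : avoidingWord q j = avoidingWord q j') (hblock : blockIndex q j = blockIndex q j') :
    j ≡ j' [MOD 2 * q] := by
  rcases j.mod_two_eq_zero_or_one with hj | hj
  · obtain ⟨hpar, hres⟩ := avoidingWord_eq_iff.1 heq
    rw [residue_of_even hq hj, residue_of_even hq (hpar.symm.trans hj), hblock,
      add_left_inj] at hres
    exact modEq_two_mul_iff.2 ⟨hpar, hres⟩
  · exact modEq_of_avoidingWord_eq_of_odd hj heq

theorem avoidingWord_congr (hq : 2 ≤ q) {j j' : ℕ} (hmod : j ≡ j' [MOD 2 * q])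
    (hblock : avoidingWord q (blockIndex q j) = avoidingWord q (blockIndex q j')) :
    avoidingWord q j = avoidingWord q j' := by
  obtain ⟨hpar, hdiv⟩ := modEq_two_mul_iff.1 hmod
  refine avoidingWord_eq_iff.2 ⟨hpar, ?_⟩
  rcases j.mod_two_eq_zero_or_one with hj | hj
  · rw [residue_of_even hq hj, residue_of_even hq (hpar.symm.trans hj), hdiv,
      (avoidingWord_eq_iff.1 hblock).2]
  · rw [residue_of_odd hj, residue_of_odd (hpar.symm.trans hj), hdiv]

theorem eq_of_modEq_of_periodic {α : Type*} {f : ℕ → α} {c j j' : ℕ} (hf : Function.Periodic f c)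
    (h : j ≡ j' [MOD c]) : f j = f j' := by
  rw [← hf.map_mod_nat j, h, hf.map_mod_nat]

theorem blockIndex_modEq (hq : 0 < q) {j j' : ℕ} (h : j ≡ j' [MOD 2 * q]) :
    blockIndex q j ≡ blockIndex q j' [MOD 2] :=
  eq_of_modEq_of_periodic (f := fun j => blockIndex q j % 2)
    (fun j => by simp [blockIndex_add_two_mul hq]) h

theorem blockStart_modEq {b b' : ℕ} (h : b ≡ b' [MOD 2]) :
    blockStart q b ≡ blockStart q b' [MOD 2 * q] :=
  eq_of_modEq_of_periodic (f := fun b => blockStart q b % (2 * q))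
    (fun b => by simp [blockStart_add_two]) h

theorem avoidingWord_blockIndex_eq_of_even (hq : 2 ≤ q) {j j' : ℕ} (hmod : j ≡ j' [MOD 2 * q])
    (hj : j % 2 = 0) (heq : avoidingWord q j = avoidingWord q j') :
    avoidingWord q (blockIndex q j) = avoidingWord q (blockIndex q j') := by
  obtain ⟨hpar, hdiv⟩ := modEq_two_mul_iff.1 hmod
  have hres := (avoidingWord_eq_iff.1 heq).2
  rw [residue_of_even hq hj, residue_of_even hq (hpar.symm.trans hj), hdiv, add_right_inj] at hres
  exact avoidingWord_eq_iff.2 ⟨blockIndex_modEq (by omega) hmod, hres⟩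

theorem blockIndex_succ_of_even (q : ℕ) {j : ℕ} (hj : j % 2 = 0) :
    blockIndex q (j + 1) = blockIndex q j := by
  rw [blockIndex, blockIndex, show (j + 1) / 2 = j / 2 by omega]

/-- One of two consecutive positions is odd, and the letter there determines both positions modulo
`2 * q`; subtracting the count from the letter at the even position decodes the block. -/
theorem avoidingWord_synchronization (hq : 2 ≤ q) {j j' : ℕ}
    (heq : avoidingWord q j = avoidingWord q j')
    (heq_succ : avoidingWord q (j + 1) = avoidingWord q (j' + 1)) :
    j + 1 ≡ j' + 1 [MOD 2 * q] ∧
      avoidingWord q (blockIndex q (j + 1)) = avoidingWord q (blockIndex q (j' + 1)) := by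
  have hpar := (avoidingWord_eq_iff.1 heq).1
  rcases j.mod_two_eq_zero_or_one with hj | hj
  · have hmod := modEq_of_avoidingWord_eq_of_odd (by omega) heq_succ
    refine ⟨hmod, ?_⟩
    rw [blockIndex_succ_of_even q hj, blockIndex_succ_of_even q (hpar.symm.trans hj)]
    exact avoidingWord_blockIndex_eq_of_even hq hmod.add_right_cancel' hj heq
  · have hmod := (modEq_of_avoidingWord_eq_of_odd hj heq).add_right 1
    exact ⟨hmod, avoidingWord_blockIndex_eq_of_even hq hmod (by omega) heq_succ⟩

end AvoidingWord

section Markers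

/-- A choice of marker offsets: in the blocks encoding the letter `a`, the marker is at distance
`off a` from the start. Every block has length at least `2 * (q / 2)`. -/
abbrev Offsets (q : ℕ) := Letter q → Fin (2 * (q / 2))

variable {q : ℕ} {off : Offsets q}

theorem Offsets.two_le (off : Offsets q) : 2 ≤ q := by
  have := (off 0).pos
  omega

theorem Offsets.pos (off : Offsets q) : 0 < q :=
  zero_lt_two.trans_le off.two_le

/-- The position of the marker of the `b`-th block. -/
def markerPos (off : Offsets q) (b : ℕ) : ℕ :=
  blockStart q b + off (avoidingWord q b)

/-- The position `j` is the marker of its block. -/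
def IsMarker (off : Offsets q) (j : ℕ) : Prop :=
  markerPos off (blockIndex q j) = j

/-- The position `j` is the last one of its block. -/
def IsBlockEnd (q j : ℕ) : Prop := blockIndex q (j + 1) ≠ blockIndex q j

/-- The block of which `j` is the marker, if any. -/
def markedBlock (off : Offsets q) (j : ℕ) : Option ℕ :=
  if markerPos off (blockIndex q j) = j then some (blockIndex q j) else none

/-- The letter encoded by the block of which `j` is the marker, if any. -/
def decode (off : Offsets q) (j : ℕ) : Option (Letter q) :=
  (markedBlock off j).map (avoidingWord q)

theorem decode_eq_none_iff {j : ℕ} : decode off j = none ↔ ¬ IsMarker off j := by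
  simp [decode, markedBlock, IsMarker]

theorem blockIndex_markerPos (b : ℕ) : blockIndex q (markerPos off b) = b :=
  blockIndex_blockStart_add off.pos b (off _).2

theorem markedBlock_eq_some_iff {j b : ℕ} : markedBlock off j = some b ↔ markerPos off b = j := by
  constructor
  · intro hj
    obtain ⟨hm, ⟨⟩⟩ := Option.ite_none_right_eq_some.1 hj
    exact hm
  · rintro rfl
    simp [markedBlock, blockIndex_markerPos]

theorem markerPos_lt (b : ℕ) : markerPos off b < blockStart q (b + 1) :=
  (Nat.add_lt_add_left (off _).2 _).trans_le (blockStart_add_le q b)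

theorem strictMono_markerPos : StrictMono (markerPos off) :=
  strictMono_nat_of_lt_succ fun b => (markerPos_lt b).trans_le (Nat.le_add_right _ _)

theorem isBlockEnd_iff (hq : 0 < q) {j : ℕ} :
    IsBlockEnd q j ↔ blockStart q (blockIndex q j + 1) = j + 1 := by
  have hle : blockStart q (blockIndex q j + 1) ≤ j + 1 ↔ blockIndex q j < blockIndex q (j + 1) :=
    blockStart_le_iff hq
  have hlt : j < blockStart q (blockIndex q j + 1) :=
    (lt_blockStart_iff hq).2 (Nat.lt_succ_self _)
  have hmono : blockIndex q j ≤ blockIndex q (j + 1) := by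
    unfold blockIndex
    gcongr
    omega
  unfold IsBlockEnd
  omega

theorem isBlockEnd_congr (hq : 0 < q) {j j' : ℕ} (heq : avoidingWord q j = avoidingWord q j') :
    IsBlockEnd q j ↔ IsBlockEnd q j' := by
  have hpar := (avoidingWord_eq_iff.1 heq).1
  rcases j.mod_two_eq_zero_or_one with hj | hj
  · simp [IsBlockEnd, blockIndex_succ_of_even q hj, blockIndex_succ_of_even q (hpar.symm.trans hj)]
  · refine (eq_of_modEq_of_periodic (f := IsBlockEnd q) (fun j => ?_)
      (modEq_of_avoidingWord_eq_of_odd hj heq)).to_iff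
    simp [IsBlockEnd, add_right_comm j, blockIndex_add_two_mul hq]

theorem blockStart_blockIndex_le (hq : 0 < q) (j : ℕ) : blockStart q (blockIndex q j) ≤ j :=
  (blockStart_le_iff hq).2 le_rfl

theorem decode_congr {j j' : ℕ} (hmod : j ≡ j' [MOD 2 * q])
    (hblock : avoidingWord q (blockIndex q j) = avoidingWord q (blockIndex q j')) :
    decode off j = decode off j' := by
  have hq : 0 < q := off.pos
  have hoffset : j - blockStart q (blockIndex q j) = j' - blockStart q (blockIndex q j') :=
    eq_of_modEq_of_periodic (f := fun j => j - blockStart q (blockIndex q j))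
      (fun j => by simp only [blockIndex_add_two_mul hq, blockStart_add_two, Nat.add_sub_add_right])
      hmod
  have hmarker : markerPos off (blockIndex q j) = j ↔ markerPos off (blockIndex q j') = j' := by
    have := blockStart_blockIndex_le hq j
    have := blockStart_blockIndex_le hq j'
    unfold markerPos
    rw [hblock]
    omega
  simp only [decode, markedBlock, hmarker, apply_ite (Option.map (avoidingWord q)), Option.map_some,
    Option.map_none, hblock]

theorem markerPos_modEq {b b' : ℕ} (h : avoidingWord q b = avoidingWord q b') :
    markerPos off b ≡ markerPos off b' [MOD 2 * q] := by
  rw [markerPos, markerPos, h]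
  exact (blockStart_modEq (avoidingWord_eq_iff.1 h).1).add_right _

theorem avoidingWord_blockStart_add_injOn (q b : ℕ) :
    Set.InjOn (fun o => avoidingWord q (blockStart q b + o)) (Set.Iio (2 * (q / 2))) := by
  intro o ho o' ho' heq
  have ho : o < 2 * (q / 2) := ho
  have ho' : o' < 2 * (q / 2) := ho'
  have hq : 2 ≤ q := by omega
  have hmod := modEq_of_avoidingWord_eq_of_blockIndex_eq hq heq <| by
    rw [blockIndex_blockStart_add (by omega) b ho, blockIndex_blockStart_add (by omega) b ho']
  exact Nat.ModEq.eq_of_lt_of_lt (hmod.add_left_cancel' _) (by omega) (by omega)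

theorem exists_avoidingWord_notMem {bad : Finset (Letter q)} (hbad : bad.card < 2 * (q / 2))
    (b : ℕ) :
    ∃ o < 2 * (q / 2), avoidingWord q (blockStart q b + o) ∉ bad := by
  by_contra! hall
  have := Finset.card_le_card_of_injOn (s := Finset.range (2 * (q / 2))) (t := bad)
    (fun o => avoidingWord q (blockStart q b + o)) (fun o ho => hall o (List.mem_range.1 ho))
    (by simpa using avoidingWord_blockStart_add_injOn q b)
  simp only [Finset.card_range] at this
  omega

theorem exists_offsets_forall_notMem {bad : Finset (Letter q)} (hbad : bad.card < 2 * (q / 2)) :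
    ∃ off : Offsets q, ∀ b, avoidingWord q (markerPos off b) ∉ bad := by
  choose o ho ho_bad using exists_avoidingWord_notMem hbad
  let block (a : Letter q) : ℕ := Function.invFun (avoidingWord q) a
  let off : Offsets q := fun a => ⟨o (block a), ho _⟩
  refine ⟨off, fun b => ?_⟩
  have hblock : avoidingWord q (block (avoidingWord q b)) = avoidingWord q b :=
    Function.invFun_eq ⟨b, rfl⟩
  rw [← avoidingWord_congr off.two_le (markerPos_modEq (off := off) hblock)
    (by rwa [blockIndex_markerPos, blockIndex_markerPos])]
  simpa only [markerPos, off, hblock] using ho_bad (block (avoidingWord q b))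

/-- The gap before the position `t` lies to the right of the marker of the block containing `t`. -/
def AfterMarker (off : Offsets q) (t : ℕ) : Prop :=
  markerPos off (blockIndex q t) < t

/-- A position across which `AfterMarker` may change: a marker or the end of a block. -/
def IsEvent (off : Offsets q) (j : ℕ) : Prop := IsMarker off j ∨ IsBlockEnd q j

theorem IsBlockEnd.markerPos_le {j : ℕ} (hj : IsBlockEnd q j) :
    markerPos off (blockIndex q j) ≤ j := by
  have := (isBlockEnd_iff off.pos).1 hj
  have := markerPos_lt (off := off) (blockIndex q j)
  omega

theorem IsBlockEnd.not_afterMarker_succ {j : ℕ} (hj : IsBlockEnd q j) :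
    ¬ AfterMarker off (j + 1) := by
  have hq : 0 < q := off.pos
  have hlt := (isBlockEnd_iff hq).1 hj
  have : blockIndex q j + 1 ≤ blockIndex q (j + 1) := (blockStart_le_iff hq).1 hlt.le
  have := (strictMono_markerPos (off := off)).monotone this
  have : blockStart q (blockIndex q j + 1) ≤ markerPos off (blockIndex q j + 1) :=
    Nat.le_add_right _ _
  unfold AfterMarker
  omega

theorem IsEvent.afterMarker_iff {j : ℕ} (hj : IsEvent off j) :
    AfterMarker off j ↔ ¬ IsMarker off j := by
  refine ⟨fun h => h.ne, fun hm => ?_⟩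
  exact lt_of_le_of_ne (hj.resolve_left hm).markerPos_le hm

theorem afterMarker_succ_iff_le {j : ℕ} (hj : ¬ IsBlockEnd q j) :
    AfterMarker off (j + 1) ↔ markerPos off (blockIndex q j) ≤ j := by
  rw [AfterMarker, not_not.1 hj, Nat.lt_succ_iff]

theorem IsEvent.afterMarker_succ_iff {j : ℕ} (hj : IsEvent off j) :
    AfterMarker off (j + 1) ↔ ¬ IsBlockEnd q j := by
  refine ⟨fun h he => he.not_afterMarker_succ h, fun he => ?_⟩
  exact (afterMarker_succ_iff_le he).2 (hj.resolve_right he).le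

theorem afterMarker_succ_iff_of_not_isEvent {j : ℕ} (hj : ¬ IsEvent off j) :
    AfterMarker off (j + 1) ↔ AfterMarker off j := by
  obtain ⟨hm, he⟩ := not_or.1 hj
  rw [afterMarker_succ_iff_le he, AfterMarker, lt_iff_le_and_ne]
  exact (and_iff_left hm).symm

theorem afterMarker_add_iff {t d : ℕ} (hd : ∀ i < d, ¬ IsEvent off (t + i)) :
    AfterMarker off (t + d) ↔ AfterMarker off t := by
  induction d with
  | zero => rfl
  | succ d ih =>
    rw [← add_assoc, afterMarker_succ_iff_of_not_isEvent (hd d d.lt_succ_self)]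
    exact ih fun i hi => hd i (hi.trans d.lt_succ_self)

theorem exists_first_isEvent_and_afterMarker_iff {t d : ℕ} (h : ∃ i < d, IsEvent off (t + i)) :
    ∃ i < d, IsEvent off (t + i) ∧ (∀ k < i, ¬ IsEvent off (t + k)) ∧
      (AfterMarker off t ↔ ¬ IsMarker off (t + i)) := by
  classical
  obtain ⟨hi, hevent⟩ := Nat.find_spec h
  have hmin (k : ℕ) (hk : k < Nat.find h) : ¬ IsEvent off (t + k) := fun hk' =>
    Nat.find_min h hk ⟨hk.trans hi, hk'⟩
  exact ⟨Nat.find h, hi, hevent, hmin, by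
    rw [← hevent.afterMarker_iff, afterMarker_add_iff hmin]⟩

theorem afterMarker_left_iff {t d : ℕ} (h : ∃ i < d, IsEvent off (t + i)) :
    AfterMarker off t ↔ ∃ i < d, IsBlockEnd q (t + i) ∧ ∀ k ≤ i, ¬ IsMarker off (t + k) := by
  obtain ⟨j, hj, hevent, hfirst, hafter⟩ := exists_first_isEvent_and_afterMarker_iff h
  refine hafter.trans ⟨fun hm => ⟨j, hj, hevent.resolve_left hm, fun k hk => ?_⟩, ?_⟩
  · rcases hk.lt_or_eq with hk | rfl
    · exact fun hmk => hfirst k hk (.inl hmk)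
    · exact hm
  · rintro ⟨i, -, hend, hm⟩
    exact hm j (not_lt.1 fun hij => hfirst i hij (.inr hend))

theorem exists_last_isEvent_and_afterMarker_iff {t d : ℕ} (h : ∃ i < d, IsEvent off (t + i)) :
    ∃ i < d, IsEvent off (t + i) ∧ (∀ k < d, i < k → ¬ IsEvent off (t + k)) ∧
      (AfterMarker off (t + d) ↔ ¬ IsBlockEnd q (t + i)) := by
  induction d with
  | zero => simp at h
  | succ d ih =>
    by_cases hd : IsEvent off (t + d)
    · exact ⟨d, d.lt_succ_self, hd, fun k hk hdk => by omega, hd.afterMarker_succ_iff⟩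
    · have hlt {i : ℕ} (hi : i < d + 1) (hne : i ≠ d) : i < d := by omega
      obtain ⟨i, hi, hevent⟩ := h
      obtain ⟨j, hj, hevent, hlast, hafter⟩ :=
        ih ⟨i, hlt hi (by rintro rfl; exact hd hevent), hevent⟩
      refine ⟨j, hj.trans d.lt_succ_self, hevent, fun k hk hjk => ?_, ?_⟩
      · by_cases hkd : k = d
        · exact hkd ▸ hd
        · exact hlast k (hlt hk hkd) hjk
      · rw [← hafter, ← add_assoc, afterMarker_succ_iff_of_not_isEvent hd]

theorem afterMarker_right_iff {t d : ℕ} (h : ∃ i < d, IsEvent off (t + i)) :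
    AfterMarker off (t + d) ↔
      ∃ i < d, IsMarker off (t + i) ∧ ∀ k < d, i ≤ k → ¬ IsBlockEnd q (t + k) := by
  obtain ⟨j, hj, hevent, hlast, hafter⟩ := exists_last_isEvent_and_afterMarker_iff h
  refine hafter.trans ⟨fun he => ⟨j, hj, hevent.resolve_right he, fun k hk hjk => ?_⟩, ?_⟩
  · rcases hjk.lt_or_eq with hjk | rfl
    · exact fun hek => hlast k hk hjk (.inr hek)
    · exact he
  · rintro ⟨i, hi, hm, he⟩
    exact he j hj (not_lt.1 fun hji => hlast i hi hji (.inl hm))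

theorem afterMarker_of_not_isMarker {t d : ℕ} (h : ∃ i < d, IsEvent off (t + i))
    (hm : ∀ i < d, ¬ IsMarker off (t + i)) :
    AfterMarker off t ∧ ¬ AfterMarker off (t + d) := by
  obtain ⟨i, hi, -, -, hleft⟩ := exists_first_isEvent_and_afterMarker_iff h
  obtain ⟨j, hj, hevent, -, hright⟩ := exists_last_isEvent_and_afterMarker_iff h
  exact ⟨hleft.2 (hm i hi), fun h => hright.1 h (hevent.resolve_left (hm j hj))⟩

end Markers

section Deletion

variable {q : ℕ} {off : Offsets q} {w : List (Letter q)} {t t' : ℕ}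

/-- The finite word `w` contains a letter from an odd position. -/
def HasOddLetter (w : List (Letter q)) : Prop := ∃ a ∈ w, a.1 = 1

/-- Some occurrence of `w` in the avoiding word contains an event. -/
def HasEvent (off : Offsets q) (w : List (Letter q)) : Prop :=
  ∃ t, OccursAt (avoidingWord q) w t ∧ ∃ i < w.length, IsEvent off (t + i)

/-- Some occurrence of `w` in the avoiding word contains a marker. -/
def HasMarker (off : Offsets q) (w : List (Letter q)) : Prop :=
  ∃ t, OccursAt (avoidingWord q) w t ∧ ∃ i < w.length, IsMarker off (t + i)

/-- No occurrence of `w` in the avoiding word starts with a marker. As letters are decoded from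
pairs of consecutive letters, this makes the markers in `w` independent of the occurrence. -/
def UnmarkedStart (off : Offsets q) (w : List (Letter q)) : Prop :=
  ∀ t, OccursAt (avoidingWord q) w t → ¬ IsMarker off t

theorem OccursAt.hasOddLetter_iff (hw : OccursAt (avoidingWord q) w t) :
    HasOddLetter w ↔ ∃ i < w.length, (t + i) % 2 = 1 := by
  have hodd (j : ℕ) : ((j : ℕ) : ZMod 2) = 1 ↔ j % 2 = 1 := by
    rw [← Nat.cast_one, ZMod.natCast_eq_natCast_iff']
  constructor
  · rintro ⟨a, ha, hpar⟩
    obtain ⟨i, hi, rfl⟩ := List.mem_iff_getElem.1 ha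
    rw [hw.getElem hi] at hpar
    exact ⟨i, hi, (hodd _).1 hpar⟩
  · rintro ⟨i, hi, hpar⟩
    exact ⟨w[i], List.getElem_mem hi, by rw [hw.getElem hi]; exact (hodd _).2 hpar⟩

theorem OccursAt.even_of_not_hasOddLetter (hw : OccursAt (avoidingWord q) w t) (hne : w ≠ [])
    (hodd : ¬ HasOddLetter w) : t % 2 = 0 ∧ w.length = 1 := by
  have hlen := List.length_pos_of_ne_nil hne
  have heven (i : ℕ) (hi : i < w.length) : (t + i) % 2 ≠ 1 := fun h =>
    hodd (hw.hasOddLetter_iff.2 ⟨i, hi, h⟩)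
  have h₀ := heven 0 hlen
  refine ⟨by omega, le_antisymm (not_lt.1 fun h₁ => ?_) hlen⟩
  have := heven 1 h₁
  omega

theorem OccursAt.modEq_of_hasOddLetter (hw : OccursAt (avoidingWord q) w t)
    (hw' : OccursAt (avoidingWord q) w t') (hodd : HasOddLetter w) : t ≡ t' [MOD 2 * q] := by
  obtain ⟨i, hi, hodd⟩ := hw.hasOddLetter_iff.1 hodd
  exact (modEq_of_avoidingWord_eq_of_odd hodd (hw.apply_eq hw' hi)).add_right_cancel' i

theorem UnmarkedStart.decode_eq (hU : UnmarkedStart off w) (hw : OccursAt (avoidingWord q) w t)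
    (hw' : OccursAt (avoidingWord q) w t') {i : ℕ} (hi : i < w.length) :
    decode off (t + i) = decode off (t' + i) := by
  cases i with
  | zero => exact (decode_eq_none_iff.2 (hU t hw)).trans (decode_eq_none_iff.2 (hU t' hw')).symm
  | succ i =>
    obtain ⟨hmod, hblock⟩ := avoidingWord_synchronization off.two_le
      (hw.apply_eq hw' (i.lt_succ_self.trans hi)) (hw.apply_eq hw' hi)
    exact decode_congr hmod hblock

theorem UnmarkedStart.isMarker_iff (hU : UnmarkedStart off w)
    (hw : OccursAt (avoidingWord q) w t) (hw' : OccursAt (avoidingWord q) w t') {i : ℕ}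
    (hi : i < w.length) : IsMarker off (t + i) ↔ IsMarker off (t' + i) := by
  rw [← not_iff_not, ← decode_eq_none_iff, ← decode_eq_none_iff, hU.decode_eq hw hw' hi]

theorem OccursAt.isBlockEnd_iff (hq : 0 < q) (hw : OccursAt (avoidingWord q) w t)
    (hw' : OccursAt (avoidingWord q) w t') {i : ℕ} (hi : i < w.length) :
    IsBlockEnd q (t + i) ↔ IsBlockEnd q (t' + i) :=
  isBlockEnd_congr hq (hw.apply_eq hw' hi)

theorem UnmarkedStart.isEvent_iff (hU : UnmarkedStart off w)
    (hw : OccursAt (avoidingWord q) w t) (hw' : OccursAt (avoidingWord q) w t') {i : ℕ}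
    (hi : i < w.length) : IsEvent off (t + i) ↔ IsEvent off (t' + i) :=
  or_congr (hU.isMarker_iff hw hw' hi)
    (hw.isBlockEnd_iff off.pos hw' hi)

theorem HasMarker.hasEvent (hw : HasMarker off w) : HasEvent off w := by
  obtain ⟨t, ht, i, hi, hm⟩ := hw
  exact ⟨t, ht, i, hi, .inl hm⟩

theorem IsBlockEnd.odd {j : ℕ} (hj : IsBlockEnd q j) : j % 2 = 1 := by
  by_contra h
  exact hj (blockIndex_succ_of_even q (by omega))

theorem HasEvent.hasOddLetter (hw : HasEvent off w) (hU : UnmarkedStart off w) :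
    HasOddLetter w := by
  obtain ⟨t, ht, i, hi, hevent⟩ := hw
  by_contra hodd
  obtain ⟨heven, hlen⟩ := ht.even_of_not_hasOddLetter (List.ne_nil_of_length_pos (by omega)) hodd
  obtain rfl : i = 0 := by omega
  have := (hevent.resolve_left (hU t ht)).odd
  omega

theorem UnmarkedStart.exists_isMarker (hU : UnmarkedStart off w) (hw : HasMarker off w)
    (ht : OccursAt (avoidingWord q) w t) : ∃ i < w.length, IsMarker off (t + i) := by
  obtain ⟨t', ht', i, hi, hm⟩ := hw
  exact ⟨i, hi, (hU.isMarker_iff ht' ht hi).1 hm⟩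

theorem UnmarkedStart.exists_isEvent (hU : UnmarkedStart off w) (hw : HasEvent off w)
    (ht : OccursAt (avoidingWord q) w t) : ∃ i < w.length, IsEvent off (t + i) := by
  obtain ⟨t', ht', i, hi, hm⟩ := hw
  exact ⟨i, hi, (hU.isEvent_iff ht' ht hi).1 hm⟩

theorem blockIndex_add_of_not_isBlockEnd {d : ℕ} (hd : ∀ i < d, ¬ IsBlockEnd q (t + i)) :
    blockIndex q (t + d) = blockIndex q t := by
  induction d with
  | zero => rfl
  | succ d ih =>
    rw [← add_assoc, not_not.1 (hd d d.lt_succ_self)]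
    exact ih fun i hi => hd i (hi.trans d.lt_succ_self)

theorem blockIndex_div_two (q j : ℕ) : blockIndex q j / 2 = j / 2 / q := by
  rw [blockIndex, Nat.div_div_eq_div_mul, mul_comm q, ← Nat.div_div_eq_div_mul]
  congr 1
  omega

theorem div_two_mod_lt_of_blockIndex_eq {j j' : ℕ} (hblock : blockIndex q j' = blockIndex q j)
    (hlt : j / 2 < j' / 2) : j / 2 % q < j' / 2 % q := by
  have hdiv : j' / 2 / q = j / 2 / q := by
    rw [← blockIndex_div_two, ← blockIndex_div_two, hblock]
  have := Nat.div_add_mod (j / 2) q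
  have := Nat.div_add_mod (j' / 2) q
  rw [hdiv] at this
  omega

variable {Y : Type*} {h : Y → List (Letter q)} {p : List Y} {s : ℕ}

open Classical in
theorem ziminEncounters_of_filter_hasOddLetter (hne : ∀ x ∈ p, h x ≠ [])
    (hp : OccursAt (avoidingWord q) (p.flatMap h) s)
    (hZ : ZiminEncounters (p.filter fun x => HasOddLetter (h x))) : ZiminEncounters p := by
  suffices ZiminEncounters (p.filter fun _ => True) by simpa using this
  refine hp.ziminEncounters_filter_of_lt (κ := (· % 2)) (M := 1) (fun t => by omega)
    (fun _ _ _ => trivial) (fun _ _ hx => (hx trivial).elim) (fun x hx _ t t' ht ht' => ?_)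
    (fun x hx _ hodd t ht => ?_) hZ
  · have := (avoidingWord_eq_iff.1 (ht.apply_eq_of_ne_nil ht' (hne x hx))).1
    omega
  · obtain ⟨heven, hlen⟩ := ht.even_of_not_hasOddLetter (hne x hx) hodd
    omega

open Classical in
theorem ziminEncounters_filter_hasOddLetter (hne : ∀ x ∈ p, h x ≠ [])
    (hU : ∀ x ∈ p, UnmarkedStart off (h x)) (hp : OccursAt (avoidingWord q) (p.flatMap h) s)
    (hZ : ZiminEncounters (p.filter fun x => HasEvent off (h x))) :
    ZiminEncounters (p.filter fun x => HasOddLetter (h x)) := by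
  have hmod {t t' : ℕ} (htt' : t ≡ t' [MOD 2 * q]) : t / 2 % q = t' / 2 % q :=
    eq_of_modEq_of_periodic (f := fun t => t / 2 % q)
      (fun t => by simp [Nat.add_mul_div_left]) htt'
  refine hp.ziminEncounters_filter_of_lt (κ := (· / 2 % q)) (M := q)
    (fun t => (Nat.mod_lt _ off.pos).le)
    (fun x hx hevent => hevent.hasOddLetter (hU x hx))
    (fun x hx hodd t ht => ?_) (fun _ _ hodd _ _ ht ht' => ?_)
    (fun x _ hodd hevent t ht => ?_) hZ
  · obtain ⟨heven, hlen⟩ := ht.even_of_not_hasOddLetter (hne x hx) hodd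
    rw [show (t + (h x).length) / 2 = t / 2 by omega]
  · have := ht.modEq_of_hasOddLetter ht' hodd
    exact ⟨hmod this, hmod (this.add_right _)⟩
  · have hsame := blockIndex_add_of_not_isBlockEnd (d := (h x).length) fun i hi hend =>
      hevent ⟨t, ht, i, hi, .inr hend⟩
    obtain ⟨i, hi, hodd⟩ := ht.hasOddLetter_iff.1 hodd
    exact div_two_mod_lt_of_blockIndex_eq hsame (by omega)

theorem UnmarkedStart.afterMarker_left_congr (hU : UnmarkedStart off w) (hw : HasEvent off w)
    (ht : OccursAt (avoidingWord q) w t) (ht' : OccursAt (avoidingWord q) w t') :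
    AfterMarker off t ↔ AfterMarker off t' := by
  rw [afterMarker_left_iff (hU.exists_isEvent hw ht),
    afterMarker_left_iff (hU.exists_isEvent hw ht')]
  exact exists_congr fun i => and_congr_right fun hi =>
    and_congr (ht.isBlockEnd_iff off.pos ht' hi)
      (forall₂_congr fun k hk => not_congr (hU.isMarker_iff ht ht' (hk.trans_lt hi)))

theorem UnmarkedStart.afterMarker_right_congr (hU : UnmarkedStart off w) (hw : HasEvent off w)
    (ht : OccursAt (avoidingWord q) w t) (ht' : OccursAt (avoidingWord q) w t') :
    AfterMarker off (t + w.length) ↔ AfterMarker off (t' + w.length) := by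
  rw [afterMarker_right_iff (hU.exists_isEvent hw ht),
    afterMarker_right_iff (hU.exists_isEvent hw ht')]
  exact exists_congr fun i => and_congr_right fun hi =>
    and_congr (hU.isMarker_iff ht ht' hi) (forall₂_congr fun k hk => imp_congr_right fun _ =>
      not_congr (ht.isBlockEnd_iff off.pos ht' hk))

open Classical in
theorem ziminEncounters_filter_hasEvent (hU : ∀ x ∈ p, UnmarkedStart off (h x))
    (hp : OccursAt (avoidingWord q) (p.flatMap h) s)
    (hZ : ZiminEncounters (p.filter fun x => HasMarker off (h x))) :
    ZiminEncounters (p.filter fun x => HasEvent off (h x)) := by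
  let zone (t : ℕ) : ℕ := if AfterMarker off t then 0 else 1
  have zone_congr {t t' : ℕ} (htt' : AfterMarker off t ↔ AfterMarker off t') :
      zone t = zone t' := by simp only [zone, htt']
  refine hp.ziminEncounters_filter_of_lt (κ := zone) (M := 1)
    (fun t => by by_cases ht : AfterMarker off t <;> simp [zone, ht])
    (fun _ _ hmarker => hmarker.hasEvent) (fun _ _ hevent t ht => ?_)
    (fun x hx hevent t t' ht ht' => ?_) (fun x hx hevent hmarker t ht => ?_) hZ
  · exact zone_congr (afterMarker_add_iff fun i hi hi' => hevent ⟨t, ht, i, hi, hi'⟩)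
  · exact ⟨zone_congr ((hU x hx).afterMarker_left_congr hevent ht ht'),
      zone_congr ((hU x hx).afterMarker_right_congr hevent ht ht')⟩
  · obtain ⟨hleft, hright⟩ := afterMarker_of_not_isMarker ((hU x hx).exists_isEvent hevent ht)
      fun i hi hi' => hmarker ⟨t, ht, i, hi, hi'⟩
    simp [zone, hleft, hright]

/-- The word decoded at the markers in `w`, read off from a chosen occurrence of `w` in the avoiding
word (junk if there is none). -/
noncomputable def decodeWord (off : Offsets q) (w : List (Letter q)) :
    List (Letter q) :=
  (List.range' (Classical.epsilon (OccursAt (avoidingWord q) w)) w.length).filterMap (decode off)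

theorem UnmarkedStart.decodeWord_eq (hU : UnmarkedStart off w)
    (ht : OccursAt (avoidingWord q) w t) :
    decodeWord off w = (List.range' t w.length).filterMap (decode off) := by
  have hspec : OccursAt (avoidingWord q) w (Classical.epsilon (OccursAt (avoidingWord q) w)) :=
    Classical.epsilon_spec ⟨t, ht⟩
  rw [decodeWord, List.range'_eq_map_range, List.range'_eq_map_range, List.filterMap_map,
    List.filterMap_map]
  exact List.filterMap_congr fun i hi => hU.decode_eq hspec ht (List.mem_range.1 hi)

theorem UnmarkedStart.decodeWord_ne_nil_iff (hU : UnmarkedStart off w)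
    (ht : OccursAt (avoidingWord q) w t) : decodeWord off w ≠ [] ↔ HasMarker off w := by
  simp only [hU.decodeWord_eq ht, ne_eq, List.filterMap_eq_nil_iff, decode_eq_none_iff,
    List.mem_range'_1]
  push Not
  constructor
  · rintro ⟨j, ⟨htj, hj⟩, hm⟩
    exact ⟨t, ht, j - t, by omega, by rwa [Nat.add_sub_cancel' htj]⟩
  · intro hm
    obtain ⟨i, hi, hm⟩ := hU.exists_isMarker hm ht
    exact ⟨t + i, ⟨by omega, by omega⟩, hm⟩

theorem exists_occursAt_filterMap_decode (off : Offsets q) (s d : ℕ) :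
    ∃ c, OccursAt (avoidingWord q) ((List.range' s d).filterMap (decode off)) c := by
  obtain ⟨c, e, heq, -⟩ := exists_filterMap_range'_eq_range' strictMono_markerPos
    (fun _ _ => markedBlock_eq_some_iff (off := off)) s d
  refine ⟨c, ?_⟩
  rw [show decode off = fun j => (markedBlock off j).map (avoidingWord q) from rfl,
    ← List.map_filterMap, heq]
  simp [OccursAt]

theorem length_filterMap_decode_lt {d : ℕ} (hd : 0 < d) (hs : ¬ IsMarker off s) :
    ((List.range' s d).filterMap (decode off)).length < d := by
  calc _ < (List.range' s d).length := List.length_filterMap_lt_length_iff_exists.2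
        ⟨s, by simp [hd], decode_eq_none_iff.2 hs⟩
    _ = d := List.length_range'

theorem exists_unmarkedStart [DecidableEq Y] (hne : ∀ x ∈ p, h x ≠ [])
    (hcard : p.toFinset.card < 2 * (q / 2)) :
    ∃ off : Offsets q, ∀ x ∈ p, UnmarkedStart off (h x) := by
  obtain ⟨off, hoff⟩ := exists_offsets_forall_notMem
    (bad := p.toFinset.image fun x => (h x).headD 0)
    (Finset.card_image_le.trans_lt hcard)
  refine ⟨off, fun x hx t ht hm => hoff (blockIndex q t) (Finset.mem_image.2 ⟨x, by simpa, ?_⟩)⟩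
  have hlen := List.length_pos_of_ne_nil (hne x hx)
  rw [hm]
  simp [List.headD_eq_head?_getD, List.head?_eq_getElem?, List.getElem?_eq_getElem hlen,
    ht.getElem hlen]

open Classical in
theorem flatMap_decodeWord_filter_hasMarker (hU : ∀ x ∈ p, UnmarkedStart off (h x))
    (hp : OccursAt (avoidingWord q) (p.flatMap h) s) :
    (p.filter fun x => HasMarker off (h x)).flatMap (fun x => decodeWord off (h x)) =
      (List.range' s (p.flatMap h).length).filterMap (decode off) := by
  rw [flatMap_filter_eq_flatMap_ite]
  refine hp.filterMap_flatMap fun x hx t ht => ?_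
  rw [← (hU x hx).decodeWord_eq ht, ite_eq_left_iff]
  exact fun hm => (not_ne_iff.1 (((hU x hx).decodeWord_ne_nil_iff ht).not.2 hm)).symm

theorem ziminEncounters_of_occursAt [DecidableEq Y] (hne : ∀ x ∈ p, h x ≠ [])
    (hcard : p.toFinset.card < 2 * (q / 2)) (hp : OccursAt (avoidingWord q) (p.flatMap h) s) :
    ZiminEncounters p := by
  classical
  induction hn : (p.flatMap h).length using Nat.strong_induction_on generalizing p h s with
  | _ n ih =>
  cases p with
  | nil => exact ⟨0, fun _ => [], by simp, by simp⟩
  | cons x v =>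
    obtain ⟨off, hU⟩ := exists_unmarkedStart hne hcard
    refine ziminEncounters_of_filter_hasOddLetter hne hp <|
      ziminEncounters_filter_hasOddLetter hne hU hp <| ziminEncounters_filter_hasEvent hU hp ?_
    have hdecode := flatMap_decodeWord_filter_hasMarker hU hp
    obtain ⟨c, hc⟩ := exists_occursAt_filterMap_decode off s ((x :: v).flatMap h).length
    have hpos : 0 < ((x :: v).flatMap h).length := by
      simp [List.length_pos_of_ne_nil (hne x List.mem_cons_self)]
    have hs : ¬ IsMarker off s := hU x List.mem_cons_self s (occursAt_flatMap_cons.1 hp).1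
    refine ih _ ?_ (fun y hy => ?_) ?_ (hdecode ▸ hc) rfl
    · rw [hdecode, ← hn]
      exact length_filterMap_decode_lt hpos hs
    · obtain ⟨hyp, hm⟩ := List.mem_filter.1 hy
      obtain ⟨t, ht⟩ := hp.exists_of_mem hyp
      exact ((hU y hyp).decodeWord_ne_nil_iff ht).2 (of_decide_eq_true hm)
    · refine (Finset.card_le_card fun y hy => ?_).trans_lt hcard
      exact List.mem_toFinset.2 (List.mem_of_mem_filter (List.mem_toFinset.1 hy))

end Deletion

theorem simultaneous_avoidance_general {Y : Type*} [DecidableEq Y] {q n : ℕ}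
    (hn : n < 2 * (q / 2)) :
    {w : List (Fin (2 * q)) |
      ∀ u : List Y, ¬ Blocking u → u.toFinset.card ≤ n → Avoids u w}.Infinite := by
  have : NeZero q := ⟨by omega⟩
  let e : Letter q ≃ Fin (2 * q) := Fintype.equivFinOfCardEq (by simp [ZMod.card])
  refine Set.infinite_of_injective_forall_mem
    (f := fun m => ((List.range m).map (avoidingWord q)).map e) (fun m m' hmm' => ?_) ?_
  · simpa using congrArg List.length hmm'
  · intro m u hu hcard henc
    obtain ⟨h, hne, hinfix⟩ : Encounters u ((List.range m).map (avoidingWord q)) := by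
      simpa [Function.comp_def] using henc.map e.symm
    obtain ⟨s, hs⟩ := exists_occursAt_of_infix hinfix
    exact hu (ziminEncounters_of_occursAt hne (hcard.trans_lt hn) hs).blocking

/-- For every `n ≥ 1` there are infinitely many words over an alphabet with
`2(n+2)` letters each of which avoids every non-blocking pattern with at most
`n` distinct letters. -/
theorem simultaneous_avoidance (n : ℕ) (hn : 1 ≤ n) :
    {w : List (Fin (2 * (n + 2))) |
      ∀ u : List ℕ, u ≠ [] → ¬ Blocking u → u.toFinset.card ≤ n → Avoids u w}.Infinite := by
  refine (simultaneous_avoidance_general (Y := ℕ) (n := n) (by omega)).mono fun w hw u _ => ?_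
  exact hw u
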